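/- arXiv:2508.18682 — 3 statements merged into one kernel-verified Lean document; each statement's English description precedes it below -/
import Mathlib

section
/- Let y : (0,∞) → (0,∞) be a decreasing function of x. Then 2·∫₀^∞ y(x) dx ≤ ∫₀^∞ inf_{x∈(0,∞)} { α^{−2}·x² + y(x)² } dα ≤ 4·∫₀^∞ y(x) dx. -/
open MeasureTheory Set

noncomputable section

/-!
Let `E α` be the infimum. Give each pair `(α, x)` of the region `x ≤ α * y x` the density
`2 * x / α ^ 2`. Integrating first over `α ≥ x / y x` gives `2 * y x`, so by Tonelli the total mass
is `2 ∫ y`. It remains to see that the mass `K α` of the slice over `α` satisfies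
`K α ≤ E α ≤ 2 * K α`. As `y` decreases, the slice lies in `(0, max x (α * y x)]` for every `x > 0`,
hence `K α ≤ max (x / α) (y x) ^ 2`. Conversely, `E α ≤ 2 * (x / α) ^ 2` for `x` outside the slice,
so the slice contains all `x` with `2 * (x / α) ^ 2 < E α`, whence `E α / 2 ≤ K α`.
-/

lemma lintegral_Ioc_two_mul_div_sq (α : ℝ) {r : ℝ} (hr : 0 ≤ r) :
    ∫⁻ x in Ioc 0 r, ENNReal.ofReal (2 * x / α ^ 2) = ENNReal.ofReal (r ^ 2 / α ^ 2) := by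
  rw [← ofReal_integral_eq_lintegral_ofReal]
  · rw [← intervalIntegral.integral_of_le hr, intervalIntegral.integral_div,
      intervalIntegral.integral_const_mul, integral_id]
    ring_nf
  · exact Continuous.integrableOn_Ioc (by fun_prop)
  · filter_upwards [ae_restrict_mem measurableSet_Ioc] with x hx
    have : 0 < x := hx.1
    positivity

lemma lintegral_Ici_div_sq {b c : ℝ} (hb : 0 ≤ b) (hc : 0 < c) :
    ∫⁻ α in Ici c, ENNReal.ofReal (b / α ^ 2) = ENNReal.ofReal (b / c) := by
  have div_sq_eq (α : ℝ) : b / α ^ 2 = b * α ^ (-2 : ℝ) := by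
    rw [Real.rpow_neg_ofNat, zpow_neg, div_eq_mul_inv, zpow_ofNat]
  simp only [div_sq_eq]
  rw [setLIntegral_congr Ioi_ae_eq_Ici.symm, ← ofReal_integral_eq_lintegral_ofReal]
  · rw [integral_const_mul, integral_Ioi_rpow_of_lt (by norm_num) hc]
    norm_num [Real.rpow_neg_one, div_eq_mul_inv]
  · exact (integrableOn_Ioi_rpow_of_lt (by norm_num) hc).const_mul b
  · filter_upwards [ae_restrict_mem measurableSet_Ioi] with α hα
    have : 0 < α := hc.trans hα
    positivity

/-- The infimum over `x > 0` of the penalized square `α⁻² x² + y(x)²`. -/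
def penalizedInf (y : ℝ → ℝ) (α : ℝ) : ℝ :=
  sInf {v : ℝ | ∃ x : ℝ, 0 < x ∧ v = (α ^ 2)⁻¹ * x ^ 2 + y x ^ 2}

/-- The density `2x / α²` on the region `x ≤ α y(x)` of the `(α, x)`-quadrant. Its marginal in `x`
is `2 y(x)`, and its marginal in `α` is comparable to `penalizedInf y α`. -/
def crossoverDensity (y : ℝ → ℝ) (α x : ℝ) : ENNReal :=
  {x | x ≤ α * y x}.indicator (fun x => ENNReal.ofReal (2 * x / α ^ 2)) x

section

variable {y : ℝ → ℝ} {α x : ℝ}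

lemma penalizedInf_nonneg : 0 ≤ penalizedInf y α := by
  refine Real.sInf_nonneg ?_
  rintro v ⟨x, -, rfl⟩
  positivity

lemma penalizedInf_le (hx : 0 < x) : penalizedInf y α ≤ x ^ 2 / α ^ 2 + y x ^ 2 := by
  refine csInf_le ⟨0, ?_⟩ ⟨x, hx, by ring⟩
  rintro v ⟨x, -, rfl⟩
  positivity

lemma le_ofReal_penalizedInf {a : ENNReal}
    (ha : ∀ x, 0 < x → a ≤ ENNReal.ofReal (x ^ 2 / α ^ 2 + y x ^ 2)) :
    a ≤ ENNReal.ofReal (penalizedInf y α) := by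
  have a_ne_top : a ≠ ⊤ := ne_top_of_le_ne_top ENNReal.ofReal_ne_top (ha 1 one_pos)
  rw [ENNReal.le_ofReal_iff_toReal_le a_ne_top penalizedInf_nonneg]
  refine le_csInf ⟨_, 1, one_pos, rfl⟩ ?_
  rintro v ⟨x, hx, rfl⟩
  rw [inv_mul_eq_div]
  exact (ENNReal.le_ofReal_iff_toReal_le a_ne_top (by positivity)).1 (ha x hx)

lemma crossoverDensity_of_le (h : x ≤ α * y x) :
    crossoverDensity y α x = ENNReal.ofReal (2 * x / α ^ 2) :=
  indicator_of_mem (s := {x | x ≤ α * y x}) h _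

lemma crossoverDensity_of_lt (h : α * y x < x) : crossoverDensity y α x = 0 :=
  indicator_of_notMem (s := {x | x ≤ α * y x}) h.not_ge _

lemma aemeasurable_uncurry_crossoverDensity {μ ν : Measure ℝ} (hy : AEMeasurable y ν) :
    AEMeasurable (Function.uncurry (crossoverDensity y)) (μ.prod ν) := by
  have region : NullMeasurableSet {p : ℝ × ℝ | p.2 ≤ p.1 * y p.2} (μ.prod ν) :=
    nullMeasurableSet_le measurable_snd.aemeasurable (measurable_fst.aemeasurable.mul hy.comp_snd)
  exact AEMeasurable.indicator₀
    (f := fun p : ℝ × ℝ => ENNReal.ofReal (2 * p.2 / p.1 ^ 2)) (by fun_prop) region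

lemma lintegral_crossoverDensity_left (hx : 0 < x) :
    ∫⁻ α in Ioi 0, crossoverDensity y α x = 2 * ENNReal.ofReal (y x) := by
  rcases le_or_gt (y x) 0 with hy | hy
  · have density_eq_zero : ∀ α ∈ Ioi (0 : ℝ), crossoverDensity y α x = 0 := fun α hα =>
      crossoverDensity_of_lt ((mul_nonpos_of_nonneg_of_nonpos (le_of_lt hα) hy).trans_lt hx)
    rw [setLIntegral_congr_fun measurableSet_Ioi density_eq_zero, lintegral_zero,
      ENNReal.ofReal_of_nonpos hy, mul_zero]
  · have hc : 0 < x / y x := div_pos hx hy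
    have density_eq (α : ℝ) : crossoverDensity y α x =
        (Ici (x / y x)).indicator (fun α => ENNReal.ofReal (2 * x / α ^ 2)) α := by
      simp only [crossoverDensity, indicator, mem_ofPred_eq, mem_Ici, div_le_iff₀ hy]
    simp only [density_eq]
    rw [setLIntegral_indicator measurableSet_Ici,
      inter_eq_left.2 (Ici_subset_Ioi.2 hc), lintegral_Ici_div_sq (by positivity) hc,
      show 2 * x / (x / y x) = 2 * y x by field_simp, ENNReal.ofReal_mul zero_le_two,
      ENNReal.ofReal_ofNat]

lemma lintegral_lintegral_crossoverDensity (hy : AEMeasurable y (volume.restrict (Ioi 0))) :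
    ∫⁻ α in Ioi 0, ∫⁻ x in Ioi 0, crossoverDensity y α x =
      2 * ∫⁻ x in Ioi 0, ENNReal.ofReal (y x) := by
  rw [lintegral_lintegral_swap (aemeasurable_uncurry_crossoverDensity hy),
    ← lintegral_const_mul' _ _ ENNReal.ofNat_ne_top]
  exact setLIntegral_congr_fun measurableSet_Ioi fun x hx => lintegral_crossoverDensity_left hx

lemma lintegral_crossoverDensity_le_sq_add_sq (hy : AntitoneOn y (Ioi 0)) (hα : 0 < α)
    (hx : 0 < x) :
    ∫⁻ z in Ioi 0, crossoverDensity y α z ≤ ENNReal.ofReal (x ^ 2 / α ^ 2 + y x ^ 2) := by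
  set r := max x (α * y x) with hr
  have slice_subset {z : ℝ} (hz : 0 < z) (hzy : z ≤ α * y z) : z ≤ r := by
    rcases le_total z x with hzx | hxz
    · exact le_max_of_le_left hzx
    · exact le_max_of_le_right (hzy.trans (by gcongr; exact hy hx hz hxz))
  have sq_div_le : r ^ 2 / α ^ 2 ≤ x ^ 2 / α ^ 2 + y x ^ 2 := by
    rcases max_choice x (α * y x) with h | h <;> rw [hr, h]
    · exact le_add_of_nonneg_right (sq_nonneg _)
    · rw [mul_pow, mul_div_cancel_left₀ _ (by positivity)]
      exact le_add_of_nonneg_left (by positivity)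
  calc ∫⁻ z in Ioi 0, crossoverDensity y α z
      ≤ ∫⁻ z in Ioi 0, (Ioc 0 r).indicator (fun z => ENNReal.ofReal (2 * z / α ^ 2)) z :=
        setLIntegral_mono' measurableSet_Ioi fun z hz => indicator_apply_le fun hzy =>
          le_indicator_apply (fun _ => le_rfl) fun hzr => (hzr ⟨hz, slice_subset hz hzy⟩).elim
    _ = ∫⁻ z in Ioc 0 r, ENNReal.ofReal (2 * z / α ^ 2) := by
        rw [setLIntegral_indicator measurableSet_Ioc, inter_eq_left.2 Ioc_subset_Ioi_self]
    _ = ENNReal.ofReal (r ^ 2 / α ^ 2) := lintegral_Ioc_two_mul_div_sq α (le_max_of_le_left hx.le)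
    _ ≤ ENNReal.ofReal (x ^ 2 / α ^ 2 + y x ^ 2) := ENNReal.ofReal_le_ofReal sq_div_le

lemma lintegral_crossoverDensity_le_ofReal_penalizedInf (hy : AntitoneOn y (Ioi 0)) (hα : 0 < α) :
    ∫⁻ x in Ioi 0, crossoverDensity y α x ≤ ENNReal.ofReal (penalizedInf y α) :=
  le_ofReal_penalizedInf fun _ hx => lintegral_crossoverDensity_le_sq_add_sq hy hα hx

lemma le_mul_of_two_mul_sq_div_lt_penalizedInf (hα : 0 < α) (hx : 0 < x) (hyx : 0 ≤ y x)
    (h : 2 * (x ^ 2 / α ^ 2) < penalizedInf y α) : x ≤ α * y x := by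
  by_contra! hlt
  have sq_le : y x ^ 2 ≤ x ^ 2 / α ^ 2 := by
    rw [← div_pow]
    gcongr
    exact (le_div_iff₀' hα).2 hlt.le
  linarith [penalizedInf_le (y := y) (α := α) hx]

lemma ofReal_penalizedInf_le_two_mul_lintegral_crossoverDensity (hy : ∀ x, 0 < x → 0 ≤ y x)
    (hα : 0 < α) :
    ENNReal.ofReal (penalizedInf y α) ≤ 2 * ∫⁻ x in Ioi 0, crossoverDensity y α x := by
  set r := α * √(penalizedInf y α / 2)
  have hr : 0 ≤ r := by positivity
  have two_mul_sq_div : 2 * (r ^ 2 / α ^ 2) = penalizedInf y α := by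
    have := penalizedInf_nonneg (y := y) (α := α)
    rw [mul_pow, mul_div_cancel_left₀ _ (by positivity), Real.sq_sqrt (by positivity)]
    ring
  have subset_slice {x : ℝ} (hx : x ∈ Ioo 0 r) : x ≤ α * y x := by
    refine le_mul_of_two_mul_sq_div_lt_penalizedInf hα hx.1 (hy x hx.1) ?_
    rw [← two_mul_sq_div]
    have := hx.1
    gcongr
    exact hx.2
  calc ENNReal.ofReal (penalizedInf y α)
      = 2 * ENNReal.ofReal (r ^ 2 / α ^ 2) := by
        rw [← two_mul_sq_div, ENNReal.ofReal_mul zero_le_two, ENNReal.ofReal_ofNat]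
    _ = 2 * ∫⁻ x in Ioo 0 r, ENNReal.ofReal (2 * x / α ^ 2) := by
        rw [setLIntegral_congr Ioo_ae_eq_Ioc, lintegral_Ioc_two_mul_div_sq α hr]
    _ = 2 * ∫⁻ x in Ioo 0 r, crossoverDensity y α x := by
        rw [setLIntegral_congr_fun measurableSet_Ioo fun x hx =>
          crossoverDensity_of_le (subset_slice hx)]
    _ ≤ 2 * ∫⁻ x in Ioi 0, crossoverDensity y α x := by
        gcongr
        exact Ioo_subset_Ioi_self

theorem two_mul_lintegral_le_lintegral_penalizedInf (hy : AntitoneOn y (Ioi 0)) :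
    2 * ∫⁻ x in Ioi 0, ENNReal.ofReal (y x) ≤
      ∫⁻ α in Ioi 0, ENNReal.ofReal (penalizedInf y α) := by
  rw [← lintegral_lintegral_crossoverDensity
    (aemeasurable_restrict_of_antitoneOn measurableSet_Ioi hy)]
  exact setLIntegral_mono' measurableSet_Ioi fun _ hα =>
    lintegral_crossoverDensity_le_ofReal_penalizedInf hy hα

theorem lintegral_penalizedInf_le_four_mul_lintegral
    (hy_meas : AEMeasurable y (volume.restrict (Ioi 0))) (hy : ∀ x, 0 < x → 0 ≤ y x) :
    ∫⁻ α in Ioi 0, ENNReal.ofReal (penalizedInf y α) ≤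
      4 * ∫⁻ x in Ioi 0, ENNReal.ofReal (y x) := by
  calc ∫⁻ α in Ioi 0, ENNReal.ofReal (penalizedInf y α)
      ≤ ∫⁻ α in Ioi 0, 2 * ∫⁻ x in Ioi 0, crossoverDensity y α x :=
        setLIntegral_mono' measurableSet_Ioi fun _ hα =>
          ofReal_penalizedInf_le_two_mul_lintegral_crossoverDensity hy hα
    _ = 2 * (2 * ∫⁻ x in Ioi 0, ENNReal.ofReal (y x)) := by
        rw [lintegral_const_mul' _ _ ENNReal.ofNat_ne_top,
          lintegral_lintegral_crossoverDensity hy_meas]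
    _ = 4 * ∫⁻ x in Ioi 0, ENNReal.ofReal (y x) := by
        rw [← mul_assoc]
        norm_num

end

/-- penalized form of an integral of a decreasing function: for decreasing
`y : (0,∞) → (0,∞)`,
`2∫₀^∞ y dx ≤ ∫₀^∞ inf_{x>0} {α⁻²x² + y(x)²} dα ≤ 4∫₀^∞ y dx` (Lebesgue integrals). -/
theorem statement16 (y : ℝ → ℝ) (hpos : ∀ x : ℝ, 0 < x → 0 < y x)
    (hdec : AntitoneOn y (Ioi (0 : ℝ))) :
    2 * ∫⁻ x in Ioi (0 : ℝ), ENNReal.ofReal (y x) ≤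
      (∫⁻ α in Ioi (0 : ℝ), ENNReal.ofReal
        (sInf {v : ℝ | ∃ x : ℝ, 0 < x ∧ v = (α ^ 2)⁻¹ * x ^ 2 + y x ^ 2})) ∧
    (∫⁻ α in Ioi (0 : ℝ), ENNReal.ofReal
        (sInf {v : ℝ | ∃ x : ℝ, 0 < x ∧ v = (α ^ 2)⁻¹ * x ^ 2 + y x ^ 2})) ≤
      4 * ∫⁻ x in Ioi (0 : ℝ), ENNReal.ofReal (y x) := by
  constructor
  · exact two_mul_lintegral_le_lintegral_penalizedInf hdec
  · exact lintegral_penalizedInf_le_four_mul_lintegral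
      (aemeasurable_restrict_of_antitoneOn measurableSet_Ioi hdec) fun x hx => (hpos x hx).le
end
end

section
/- Let A ∈ ℝ_{≥0}^{m×n} be a matrix with nonnegative entries whose row sums and column sums are all integers. Then there exists a matrix B ∈ ℤ_{≥0}^{m×n} with nonnegative integer entries having the same row sums and the same column sums as A and satisfying max_{i,j} |B_{ij} − A_{ij}| ≤ 1. -/
open Finset

/-!
Let `P` be the set of real matrices with the row and column sums of `A` whose entries lie between
the floor and the ceiling of the corresponding entry of `A`. It is compact and contains `A`, so it
has an extreme point `X`, and it suffices that `X` is integral. View the non-integral entries of `X`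
as the edges of a bipartite graph on rows and columns. Since the sums of `X` are integers, no vertex
has degree one, so there are at least as many edges as non-isolated vertices. The vertex equations
of a bipartite graph are linearly dependent, so some nonzero matrix `D` supported on these edges has
all row and column sums zero. For small `t` both `X + t • D` and `X - t • D` lie in `P`, which
contradicts extremality.
-/

section FiberSums

variable {α β γ : Type*}

lemma two_mul_card_image_le_card [DecidableEq β] {f : α → β} {S : Finset α}
    (hf : ∀ a ∈ S, ∃ b ∈ S, b ≠ a ∧ f b = f a) : 2 * #(S.image f) ≤ #S := by
  refine mul_card_image_le_card S 2 fun y hy ↦ ?_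
  obtain ⟨a, ha, rfl⟩ := mem_image.1 hy
  obtain ⟨b, hb, hne, hfb⟩ := hf a ha
  exact one_lt_card.2 ⟨b, mem_filter.2 ⟨hb, hfb⟩, a, mem_filter.2 ⟨ha, rfl⟩, hne⟩

lemma mapDomain_mapDomain_of_comp_eq {δ M : Type*} [AddCommMonoid M] {f : α → β} {f' : β → δ}
    {g : α → γ} {g' : γ → δ} (h : f' ∘ f = g' ∘ g) (x : α →₀ M) :
    (x.mapDomain f).mapDomain f' = (x.mapDomain g).mapDomain g' := by
  rw [← Finsupp.mapDomain_comp, h, Finsupp.mapDomain_comp]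

variable {K : Type*} [DivisionRing K]

/- If the two fiber-sum maps were jointly injective, they would be jointly surjective by dimension;
but `mapDomain f x` and `mapDomain g x` always have the same total. -/
lemma exists_ne_zero_mapDomain_eq_zero_of_card_le [Nonempty α] [Fintype α] [Fintype β] [Fintype γ]
    (f : α → β) (g : α → γ) (hcard : Fintype.card β + Fintype.card γ ≤ Fintype.card α) :
    ∃ x : α →₀ K, x ≠ 0 ∧ x.mapDomain f = 0 ∧ x.mapDomain g = 0 := by
  let L : (α →₀ K) →ₗ[K] (β →₀ K) × (γ →₀ K) :=
    (Finsupp.lmapDomain K K f).prod (Finsupp.lmapDomain K K g)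
  suffices hL : ¬ Function.Injective L by
    rw [injective_iff_map_eq_zero] at hL
    push Not at hL
    obtain ⟨x, hx, hx0⟩ := hL
    exact ⟨x, hx0, congrArg Prod.fst hx, congrArg Prod.snd hx⟩
  intro hinj
  have hdim : Module.finrank K (α →₀ K) = Module.finrank K ((β →₀ K) × (γ →₀ K)) := by
    refine le_antisymm (LinearMap.finrank_le_finrank_of_injective hinj) ?_
    simpa using hcard
  have hsurj := (LinearMap.injective_iff_surjective_of_finrank_eq_finrank hdim).1 hinj
  obtain ⟨b⟩ : Nonempty β := .map f ‹_›
  obtain ⟨x, hx⟩ := hsurj (.single b 1, 0)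
  have hxf : x.mapDomain f = .single b 1 := congrArg Prod.fst hx
  have hxg : x.mapDomain g = 0 := congrArg Prod.snd hx
  have htotal :
      (x.mapDomain f).mapDomain (fun _ ↦ ()) = (x.mapDomain g).mapDomain (fun _ ↦ ()) :=
    mapDomain_mapDomain_of_comp_eq (by rfl) x
  simp [hxf, hxg] at htotal

lemma exists_ne_zero_support_subset_mapDomain_eq_zero {f : α → β} {g : α → γ} {S : Finset α}
    (hS : S.Nonempty) (hf : ∀ a ∈ S, ∃ b ∈ S, b ≠ a ∧ f b = f a)
    (hg : ∀ a ∈ S, ∃ b ∈ S, b ≠ a ∧ g b = g a) :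
    ∃ x : α →₀ K, x ≠ 0 ∧ x.support ⊆ S ∧ x.mapDomain f = 0 ∧ x.mapDomain g = 0 := by
  classical
  have : Nonempty S := hS.to_subtype
  let f' : S → S.image f := fun a ↦ ⟨f a, mem_image_of_mem f a.2⟩
  let g' : S → S.image g := fun a ↦ ⟨g a, mem_image_of_mem g a.2⟩
  have hcard : Fintype.card (S.image f) + Fintype.card (S.image g) ≤ Fintype.card S := by
    have hf_card := two_mul_card_image_le_card hf
    have hg_card := two_mul_card_image_le_card hg
    simp only [Fintype.card_coe]
    lia
  obtain ⟨x, hx, hxf, hxg⟩ := exists_ne_zero_mapDomain_eq_zero_of_card_le (K := K) f' g' hcard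
  refine ⟨x.mapDomain Subtype.val, ?_, fun a ha ↦ ?_, ?_, ?_⟩
  · exact (Finsupp.mapDomain_injective Subtype.val_injective).ne_iff' Finsupp.mapDomain_zero |>.2 hx
  · obtain ⟨b, rfl⟩ := Finsupp.mem_range_of_mapDomain_ne_zero (Finsupp.mem_support_iff.1 ha)
    exact b.2
  · calc (x.mapDomain Subtype.val).mapDomain f = (x.mapDomain f').mapDomain Subtype.val :=
          mapDomain_mapDomain_of_comp_eq (by rfl) x
      _ = 0 := by rw [hxf, Finsupp.mapDomain_zero]
  · calc (x.mapDomain Subtype.val).mapDomain g = (x.mapDomain g').mapDomain Subtype.val :=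
          mapDomain_mapDomain_of_comp_eq (by rfl) x
      _ = 0 := by rw [hxg, Finsupp.mapDomain_zero]

end FiberSums

section Margins

variable {ι κ M : Type*} [AddCommMonoid M]

lemma mapDomain_fst_apply [Fintype κ] (x : ι × κ →₀ M) (i : ι) :
    x.mapDomain Prod.fst i = ∑ j, x (i, j) := by
  classical
  induction x using Finsupp.induction_linear with
  | zero => simp
  | add x y hx hy => simp [Finsupp.mapDomain_add, hx, hy, sum_add_distrib]
  | single p a => simp [Finsupp.single_apply, Prod.ext_iff, ite_and]

lemma mapDomain_snd_apply [Fintype ι] (x : ι × κ →₀ M) (j : κ) :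
    x.mapDomain Prod.snd j = ∑ i, x (i, j) := by
  classical
  induction x using Finsupp.induction_linear with
  | zero => simp
  | add x y hx hy => simp [Finsupp.mapDomain_add, hx, hy, sum_add_distrib]
  | single p a => simp [Finsupp.single_apply, Prod.ext_iff, ite_and]

end Margins

lemma exists_matrix_ne_zero_row_col_sum_eq_zero {ι κ K : Type*} [Fintype ι] [Fintype κ]
    [DivisionRing K] {S : Set (ι × κ)} (hS : S.Nonempty)
    (hrow : ∀ i j, (i, j) ∈ S → ∃ j', j' ≠ j ∧ (i, j') ∈ S)
    (hcol : ∀ i j, (i, j) ∈ S → ∃ i', i' ≠ i ∧ (i', j) ∈ S) :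
    ∃ D : Matrix ι κ K, D ≠ 0 ∧ (∀ i j, (i, j) ∉ S → D i j = 0) ∧
      (∀ i, ∑ j, D i j = 0) ∧ ∀ j, ∑ i, D i j = 0 := by
  classical
  obtain ⟨x, hx, hsupp, hfst, hsnd⟩ :=
    exists_ne_zero_support_subset_mapDomain_eq_zero (K := K) (f := Prod.fst) (g := Prod.snd)
      (S := S.toFinset) (Set.toFinset_nonempty.2 hS)
      (fun ⟨i, j⟩ h ↦ by
        obtain ⟨j', hne, hj'⟩ := hrow i j (Set.mem_toFinset.1 h)
        exact ⟨(i, j'), Set.mem_toFinset.2 hj', by simp [hne], rfl⟩)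
      (fun ⟨i, j⟩ h ↦ by
        obtain ⟨i', hne, hi'⟩ := hcol i j (Set.mem_toFinset.1 h)
        exact ⟨(i', j), Set.mem_toFinset.2 hi', by simp [hne], rfl⟩)
  refine ⟨.of fun i j ↦ x (i, j), fun h ↦ hx ?_, fun i j hij ↦ ?_, fun i ↦ ?_, fun j ↦ ?_⟩
  · ext ⟨i, j⟩
    exact congrFun₂ h i j
  · exact Finsupp.notMem_support_iff.1 fun h ↦ hij (Set.mem_toFinset.1 (hsupp h))
  · exact (mapDomain_fst_apply x i).symm.trans (DFunLike.congr_fun hfst i)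
  · exact (mapDomain_snd_apply x j).symm.trans (DFunLike.congr_fun hsnd j)

lemma exists_ne_notMem_of_sum_mem {ι G : Type*} [Fintype ι] [AddCommGroup G] (H : AddSubgroup G)
    {f : ι → G} (hsum : ∑ i, f i ∈ H) {i : ι} (hi : f i ∉ H) : ∃ k, k ≠ i ∧ f k ∉ H := by
  classical
  by_contra! hothers
  have hrest : ∑ k ∈ univ.erase i, f k ∈ H :=
    sum_mem fun k hk ↦ hothers k (ne_of_mem_erase hk)
  rw [← add_sum_erase univ f (mem_univ i)] at hsum
  exact hi ((H.add_mem_cancel_right hrest).1 hsum)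

section TransportationPolytope

variable {ι κ : Type*} [Fintype ι] [Fintype κ]

/-- The transportation polytope with entry bounds: real matrices with row sums `r`, column sums `c`
and entries between those of `l` and `u`. Taking the data `r`, `c`, `l`, `u` in `ℤ` makes all the
vertices integral. -/
def boundedTransportationPolytope (r : ι → ℤ) (c : κ → ℤ) (l u : Matrix ι κ ℤ) :
    Set (Matrix ι κ ℝ) :=
  {X | (∀ i, ∑ j, X i j = r i) ∧ (∀ j, ∑ i, X i j = c j) ∧
    ∀ i j, X i j ∈ Set.Icc (l i j : ℝ) (u i j)}

variable {r : ι → ℤ} {c : κ → ℤ} {l u : Matrix ι κ ℤ}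

namespace boundedTransportationPolytope

protected lemma isCompact : IsCompact (boundedTransportationPolytope r c l u) := by
  have hbox : IsCompact (Set.univ.pi fun i ↦ Set.univ.pi fun j ↦ Set.Icc (l i j : ℝ) (u i j)) :=
    isCompact_univ_pi fun i ↦ isCompact_univ_pi fun j ↦ isCompact_Icc
  refine hbox.of_isClosed_subset ?_ fun X hX i _ j _ ↦ hX.2.2 i j
  simp only [boundedTransportationPolytope, Set.ofPred_and, Set.ofPred_forall]
  exact (isClosed_iInter fun i ↦ isClosed_eq (by fun_prop) continuous_const).inter <|
    (isClosed_iInter fun j ↦ isClosed_eq (by fun_prop) continuous_const).inter <|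
      isClosed_iInter fun i ↦ isClosed_iInter fun j ↦ isClosed_Icc.preimage (by fun_prop)

open Filter Topology in
lemma eventually_add_smul_mem {X D : Matrix ι κ ℝ}
    (hX : X ∈ boundedTransportationPolytope r c l u)
    (hD : ∀ i j, X i j ∈ (Int.castAddHom ℝ).range → D i j = 0)
    (hrow : ∀ i, ∑ j, D i j = 0) (hcol : ∀ j, ∑ i, D i j = 0) :
    ∀ᶠ t : ℝ in 𝓝 0, X + t • D ∈ boundedTransportationPolytope r c l u := by
  obtain ⟨hXrow, hXcol, hXbox⟩ := hX
  have hbox (i j) : ∀ᶠ t : ℝ in 𝓝 0, X i j + t * D i j ∈ Set.Icc (l i j : ℝ) (u i j) := by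
    by_cases hint : X i j ∈ (Int.castAddHom ℝ).range
    · simpa [hD i j hint] using hXbox i j
    · have hl : (l i j : ℝ) < X i j := (hXbox i j).1.lt_of_ne fun h ↦ hint ⟨_, h⟩
      have hu : X i j < u i j := (hXbox i j).2.lt_of_ne fun h ↦ hint ⟨_, h.symm⟩
      have hlim : Tendsto (fun t ↦ X i j + t * D i j) (𝓝 0) (𝓝 (X i j)) :=
        Continuous.tendsto' (by fun_prop) _ _ (by simp)
      exact hlim.eventually (Icc_mem_nhds hl hu)
  filter_upwards [eventually_all.2 fun i ↦ eventually_all.2 (hbox i)] with t ht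
  refine ⟨fun i ↦ ?_, fun j ↦ ?_, ht⟩
  · simp [sum_add_distrib, ← mul_sum, hrow, hXrow]
  · simp [sum_add_distrib, ← mul_sum, hcol, hXcol]

open Filter Topology in
lemma exists_intCast_eq_of_mem_extremePoints {X : Matrix ι κ ℝ}
    (hX : X ∈ (boundedTransportationPolytope r c l u).extremePoints ℝ) (i : ι) (j : κ) :
    ∃ z : ℤ, (z : ℝ) = X i j := by
  obtain ⟨⟨hrow, hcol, hbox⟩, hext⟩ := hX
  by_contra hij
  obtain ⟨D, hD, hDint, hDrow, hDcol⟩ := exists_matrix_ne_zero_row_col_sum_eq_zero (K := ℝ)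
    (S := {p | X p.1 p.2 ∉ (Int.castAddHom ℝ).range}) ⟨(i, j), hij⟩
    (fun i _ ↦ exists_ne_notMem_of_sum_mem (Int.castAddHom ℝ).range ⟨r i, (hrow i).symm⟩)
    (fun _ j ↦ exists_ne_notMem_of_sum_mem (Int.castAddHom ℝ).range ⟨c j, (hcol j).symm⟩)
  have hadd : ∀ᶠ t : ℝ in 𝓝 0, X + t • D ∈ boundedTransportationPolytope r c l u :=
    eventually_add_smul_mem ⟨hrow, hcol, hbox⟩
      (fun i j h ↦ hDint i j (not_not_intro h)) hDrow hDcol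
  have hsub : ∀ᶠ t : ℝ in 𝓝 0, X - t • D ∈ boundedTransportationPolytope r c l u := by
    have hneg : Tendsto (fun t : ℝ ↦ -t) (𝓝 0) (𝓝 0) := continuous_neg.tendsto' _ _ neg_zero
    simpa only [neg_smul, ← sub_eq_add_neg] using hneg.eventually hadd
  obtain ⟨t, ⟨hadd_t, hsub_t⟩, ht⟩ :=
    ((hadd.and hsub).filter_mono nhdsWithin_le_nhds |>.and self_mem_nhdsWithin).exists
      (f := 𝓝[≠] (0 : ℝ))
  have hfix : X + t • D = X := hext hadd_t hsub_t (mem_openSegment_add_sub X (t • D))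
  exact smul_ne_zero ht hD (add_eq_left.1 hfix)

lemma exists_map_intCast_mem (hne : (boundedTransportationPolytope r c l u).Nonempty) :
    ∃ B : Matrix ι κ ℤ, B.map (Int.cast : ℤ → ℝ) ∈ boundedTransportationPolytope r c l u := by
  have : LocallyConvexSpace ℝ (Matrix ι κ ℝ) :=
    inferInstanceAs (LocallyConvexSpace ℝ (ι → κ → ℝ))
  obtain ⟨X, hX⟩ := boundedTransportationPolytope.isCompact.extremePoints_nonempty hne
  choose B hB using exists_intCast_eq_of_mem_extremePoints hX
  have hBX : Matrix.map B (Int.cast : ℤ → ℝ) = X := Matrix.ext hB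
  exact ⟨B, hBX ▸ hX.1⟩

end boundedTransportationPolytope

end TransportationPolytope

lemma abs_intCast_sub_le_one_of_mem_Icc_floor_ceil {R : Type*} [Ring R] [LinearOrder R]
    [IsStrictOrderedRing R] [FloorRing R] {a : R} {z : ℤ} (hz : z ∈ Set.Icc ⌊a⌋ ⌈a⌉) :
    |(z : R) - a| ≤ 1 := by
  have hlower : (⌊a⌋ : R) ≤ z := Int.cast_le.2 hz.1
  have hupper : (z : R) ≤ ⌈a⌉ := Int.cast_le.2 hz.2
  rw [abs_sub_le_iff, sub_le_iff_le_add', sub_le_iff_le_add']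
  exact ⟨hupper.trans (Int.ceil_lt_add_one a).le,
    (Int.lt_floor_add_one a).le.trans (by gcongr)⟩

theorem statement17_general {ι κ : Type*} [Fintype ι] [Fintype κ] (A : Matrix ι κ ℝ)
    (hrow : ∀ i, ∃ z : ℤ, ∑ j, A i j = z) (hcol : ∀ j, ∃ z : ℤ, ∑ i, A i j = z) :
    ∃ B : Matrix ι κ ℤ, (∀ i, ∑ j, (B i j : ℝ) = ∑ j, A i j) ∧
      (∀ j, ∑ i, (B i j : ℝ) = ∑ i, A i j) ∧ ∀ i j, B i j ∈ Set.Icc ⌊A i j⌋ ⌈A i j⌉ := by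
  choose r hr using hrow
  choose c hc using hcol
  obtain ⟨B, hBrow, hBcol, hBbox⟩ := boundedTransportationPolytope.exists_map_intCast_mem
    (r := r) (c := c) (l := .of fun i j ↦ ⌊A i j⌋) (u := .of fun i j ↦ ⌈A i j⌉)
    ⟨A, hr, hc, fun i j ↦ ⟨Int.floor_le _, Int.le_ceil _⟩⟩
  exact ⟨B, fun i ↦ (hBrow i).trans (hr i).symm, fun j ↦ (hBcol j).trans (hc j).symm,
    fun i j ↦ (hBbox i j).imp Int.cast_le.1 Int.cast_le.1⟩

/-- integer rounding in the transportation polytope: if a nonnegative real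
matrix has integer row and column sums, there is a nonnegative integer matrix with the same row
and column sums whose entries differ from those of `A` by at most `1`. -/
theorem statement17 {m n : ℕ} (A : Matrix (Fin m) (Fin n) ℝ)
    (hA : ∀ i j, 0 ≤ A i j)
    (hrow : ∀ i, ∃ z : ℤ, (∑ j, A i j) = (z : ℝ))
    (hcol : ∀ j, ∃ z : ℤ, (∑ i, A i j) = (z : ℝ)) :
    ∃ B : Matrix (Fin m) (Fin n) ℤ,
      (∀ i j, 0 ≤ B i j) ∧
      (∀ i, (∑ j, (B i j : ℝ)) = ∑ j, A i j) ∧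
      (∀ j, (∑ i, (B i j : ℝ)) = ∑ i, A i j) ∧
      (∀ i j, |(B i j : ℝ) - A i j| ≤ 1) := by
  obtain ⟨B, hBrow, hBcol, hB⟩ := statement17_general A hrow hcol
  exact ⟨B, fun i j ↦ (Int.floor_nonneg.2 (hA i j)).trans (hB i j).1, hBrow, hBcol,
    fun i j ↦ abs_intCast_sub_le_one_of_mem_Icc_floor_ceil (hB i j)⟩
end

section
/- Let X ≥ 0 be a real random variable, let a, b > 0 with a ≠ b, let α ∈ (0,1) satisfy α/a + (1−α)/b = 1, and let A, B > 0 be such that sup_{t>0} t^a·P[X > At] ≤ 1 and sup_{t>0} t^b·P[X > Bt] ≤ 1. Then E[X] ≤ K_{a,b}·A^α·B^{1−α} for a constant K_{a,b} depending only on a and b. -/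
open MeasureTheory

/-!
By the layer cake formula `∫ X⁺ = ∫_0^∞ μ {s < X} ds`. The condition on `α` says that `1` is a
proper convex combination of `1 / a` and `1 / b`, so, up to exchanging the two tail bounds,
`a < 1 < b`. Hence `A ^ a * s ^ (-a)` is integrable near `0` and `B ^ b * s ^ (-b)` near `∞`. Using
the first bound below and the second above the point `T` where they coincide, both pieces of the
integral are multiples of `A ^ α * B ^ (1 - α)`.
-/

open Set
open scoped ENNReal

lemma lintegral_Ioc_ofReal_mul_rpow {r T : ℝ} (hr : -1 < r) (hT : 0 ≤ T) (c : ℝ) :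
    ∫⁻ s in Ioc 0 T, ENNReal.ofReal (c * s ^ r) = ENNReal.ofReal (c * (T ^ (r + 1) / (r + 1))) := by
  have h_integrable : IntegrableOn (fun s : ℝ ↦ s ^ r) (Ioc 0 T) :=
    (intervalIntegrable_iff_integrableOn_Ioc_of_le hT).1
      (intervalIntegral.intervalIntegrable_rpow' hr)
  have h_nonneg : ∀ s ∈ Ioc 0 T, 0 ≤ s ^ r := fun s hs ↦ Real.rpow_nonneg hs.1.le r
  have h_integral : ∫ s in Ioc 0 T, s ^ r = T ^ (r + 1) / (r + 1) := by
    rw [← intervalIntegral.integral_of_le hT, integral_rpow (.inl hr),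
      Real.zero_rpow (by linarith), sub_zero]
  rw [← h_integral, ENNReal.ofReal_mul' (setIntegral_nonneg measurableSet_Ioc h_nonneg),
    ofReal_integral_eq_lintegral_ofReal h_integrable
      (ae_restrict_of_forall_mem measurableSet_Ioc h_nonneg),
    ← lintegral_const_mul' _ _ ENNReal.ofReal_ne_top]
  exact setLIntegral_congr_fun measurableSet_Ioc fun s hs ↦ ENNReal.ofReal_mul' (h_nonneg s hs)

lemma lintegral_Ioi_ofReal_mul_rpow {r T : ℝ} (hr : r < -1) (hT : 0 < T) (c : ℝ) :
    ∫⁻ s in Ioi T, ENNReal.ofReal (c * s ^ r) = ENNReal.ofReal (c * (-T ^ (r + 1) / (r + 1))) := by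
  have h_nonneg : ∀ s ∈ Ioi T, 0 ≤ s ^ r := fun s hs ↦ Real.rpow_nonneg (hT.trans hs).le r
  rw [← integral_Ioi_rpow_of_lt hr hT,
    ENNReal.ofReal_mul' (setIntegral_nonneg measurableSet_Ioi h_nonneg),
    ofReal_integral_eq_lintegral_ofReal (integrableOn_Ioi_rpow_of_lt hr hT)
      (ae_restrict_of_forall_mem measurableSet_Ioi h_nonneg),
    ← lintegral_const_mul' _ _ ENNReal.ofReal_ne_top]
  exact setLIntegral_congr_fun measurableSet_Ioi fun s hs ↦ ENNReal.ofReal_mul' (h_nonneg s hs)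

lemma exists_pos_rpow_mul_rpow_eq {a b α A B : ℝ} (hab : a ≠ b) (hα : α * (b - a) = a * (b - 1))
    (hA : 0 < A) (hB : 0 < B) :
    ∃ T : ℝ, 0 < T ∧ A ^ a * T ^ (1 - a) = A ^ α * B ^ (1 - α) ∧
      B ^ b * T ^ (1 - b) = A ^ α * B ^ (1 - α) := by
  have hba : b - a ≠ 0 := sub_ne_zero.2 hab.symm
  obtain rfl : α = a * (b - 1) / (b - a) := eq_div_of_mul_eq hba hα
  -- `T` solves `A ^ a * T ^ (-a) = B ^ b * T ^ (-b)`.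
  refine ⟨Real.exp ((b * Real.log B - a * Real.log A) / (b - a)), Real.exp_pos _, ?_, ?_⟩ <;>
  · simp only [Real.rpow_def_of_pos hA, Real.rpow_def_of_pos hB,
      Real.rpow_def_of_pos (Real.exp_pos _), Real.log_exp, ← Real.exp_add]
    congr 1
    field_simp
    ring

lemma lintegral_Ioi_le_of_le_rpow {a b α A B : ℝ} {F : ℝ → ℝ≥0∞} (ha : a < 1) (hb : 1 < b)
    (hα : α * (b - a) = a * (b - 1)) (hA : 0 < A) (hB : 0 < B)
    (hFa : ∀ s, 0 < s → F s ≤ ENNReal.ofReal (A ^ a * s ^ (-a)))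
    (hFb : ∀ s, 0 < s → F s ≤ ENNReal.ofReal (B ^ b * s ^ (-b))) :
    ∫⁻ s in Ioi 0, F s ≤
      ENNReal.ofReal (((1 - a)⁻¹ + (b - 1)⁻¹) * A ^ α * B ^ (1 - α)) := by
  obtain ⟨T, hT, hTa, hTb⟩ := exists_pos_rpow_mul_rpow_eq (ha.trans hb).ne hα hA hB
  have : 0 < 1 - a := sub_pos.2 ha
  have : 0 < b - 1 := sub_pos.2 hb
  have h_below : ∫⁻ s in Ioc 0 T, F s ≤
      ENNReal.ofReal ((1 - a)⁻¹ * (A ^ α * B ^ (1 - α))) := calc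
    _ ≤ ∫⁻ s in Ioc 0 T, ENNReal.ofReal (A ^ a * s ^ (-a)) :=
      setLIntegral_mono' measurableSet_Ioc fun s hs ↦ hFa s hs.1
    _ = _ := by
      rw [lintegral_Ioc_ofReal_mul_rpow (by linarith) hT.le, neg_add_eq_sub, ← hTa]
      ring_nf
  have h_above : ∫⁻ s in Ioi T, F s ≤
      ENNReal.ofReal ((b - 1)⁻¹ * (A ^ α * B ^ (1 - α))) := calc
    _ ≤ ∫⁻ s in Ioi T, ENNReal.ofReal (B ^ b * s ^ (-b)) :=
      setLIntegral_mono' measurableSet_Ioi fun s hs ↦ hFb s (hT.trans hs)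
    _ = _ := by
      rw [lintegral_Ioi_ofReal_mul_rpow (by linarith) hT, neg_add_eq_sub, ← hTb,
        ← neg_sub b 1, neg_div_neg_eq]
      ring_nf
  calc ∫⁻ s in Ioi 0, F s
    _ ≤ (∫⁻ s in Ioc 0 T, F s) + ∫⁻ s in Ioi T, F s := by
      rw [← Ioc_union_Ioi_eq_Ioi hT.le]
      exact lintegral_union_le _ _ _
    _ ≤ _ := add_le_add h_below h_above
    _ = _ := by
      rw [← ENNReal.ofReal_add (by positivity) (by positivity), ← add_mul, mul_assoc]

lemma lt_one_and_one_lt_of_div_add_div_eq_one {a b α : ℝ} (ha : 0 < a) (hab : a < b) (hα₀ : 0 < α)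
    (hα₁ : α < 1) (hα : α / a + (1 - α) / b = 1) : a < 1 ∧ 1 < b := by
  have hb : 0 < b := ha.trans hab
  have : 0 < 1 - α := sub_pos.2 hα₁
  constructor
  · have h : 1 < 1 / a := calc
      1 = α / a + (1 - α) / b := hα.symm
      _ < α / a + (1 - α) / a := by gcongr
      _ = 1 / a := by ring
    exact (one_lt_div ha).1 h
  · have h : 1 / b < 1 := calc
      1 / b = α / b + (1 - α) / b := by ring
      _ < α / a + (1 - α) / b := by gcongr
      _ = 1 := hα
    exact (div_lt_one hb).1 h

/-- The constant `K_{a,b}` of the interpolation inequality, written symmetrically in `a` and `b`.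
It is meant for exponents with `1` strictly between them. -/
noncomputable def tailInterpolationConst (a b : ℝ) : ℝ := |1 - a|⁻¹ + |1 - b|⁻¹

lemma tailInterpolationConst_comm (a b : ℝ) :
    tailInterpolationConst a b = tailInterpolationConst b a := add_comm _ _

lemma tailInterpolationConst_pos {a b : ℝ} (hab : a ≠ b) : 0 < tailInterpolationConst a b := by
  unfold tailInterpolationConst
  rcases eq_or_ne a 1 with rfl | ha
  · have : 1 - b ≠ 0 := sub_ne_zero.2 hab
    positivity
  · have : 1 - a ≠ 0 := sub_ne_zero.2 ha.symm
    positivity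

lemma tailInterpolationConst_eq {a b : ℝ} (ha : a < 1) (hb : 1 < b) :
    tailInterpolationConst a b = (1 - a)⁻¹ + (b - 1)⁻¹ := by
  rw [tailInterpolationConst, abs_of_pos (sub_pos.2 ha), abs_of_neg (sub_neg.2 hb), neg_sub]

lemma ofReal_mul_le_one_of_mul_toReal_le_one {c : ℝ} {x : ℝ≥0∞} (hx : x ≠ ∞)
    (h : c * x.toReal ≤ 1) : ENNReal.ofReal c * x ≤ 1 := by
  rw [← ENNReal.ofReal_toReal hx, ← ENNReal.ofReal_mul' ENNReal.toReal_nonneg]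
  exact ENNReal.ofReal_le_one.2 h

section Tail

variable {Ω : Type*} [MeasurableSpace Ω] {μ : Measure Ω} {X : Ω → ℝ}

lemma measure_lt_le_ofReal_rpow {a A : ℝ} (hA : 0 < A)
    (h : ∀ t, 0 < t → ENNReal.ofReal (t ^ a) * μ {ω | A * t < X ω} ≤ 1) {s : ℝ} (hs : 0 < s) :
    μ {ω | s < X ω} ≤ ENNReal.ofReal (A ^ a * s ^ (-a)) := by
  have h_inv : A ^ a * s ^ (-a) = ((s / A) ^ a)⁻¹ := by
    rw [Real.div_rpow hs.le hA.le, inv_div, Real.rpow_neg hs.le, div_eq_mul_inv]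
  rw [h_inv, ENNReal.ofReal_inv_of_pos (by positivity), ENNReal.le_inv_iff_mul_le, mul_comm]
  simpa only [mul_div_cancel₀ s hA.ne'] using h (s / A) (by positivity)

lemma lintegral_ofReal_eq_lintegral_meas_lt (hX : AEMeasurable X μ) :
    ∫⁻ ω, ENNReal.ofReal (X ω) ∂μ = ∫⁻ s in Ioi 0, μ {ω | s < X ω} := calc
  _ = ∫⁻ ω, ENNReal.ofReal (max (X ω) 0) ∂μ := by
    simp only [ENNReal.ofReal_max, ENNReal.ofReal_zero, max_eq_left zero_le]
  _ = ∫⁻ s in Ioi 0, μ {ω | s < max (X ω) 0} :=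
    lintegral_eq_lintegral_meas_lt μ (ae_of_all _ fun _ ↦ le_max_right _ _)
      (hX.max aemeasurable_const)
  _ = _ := setLIntegral_congr_fun measurableSet_Ioi fun s (hs : 0 < s) ↦ by
    simp only [lt_max_iff, hs.not_gt, or_false]

lemma lintegral_ofReal_le_of_tail_le {a b α A B : ℝ} (ha : 0 < a) (hab : a < b) (hα₀ : 0 < α)
    (hα₁ : α < 1) (hα : α / a + (1 - α) / b = 1) (hA : 0 < A) (hB : 0 < B) (hX : AEMeasurable X μ)
    (hXa : ∀ t, 0 < t → ENNReal.ofReal (t ^ a) * μ {ω | A * t < X ω} ≤ 1)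
    (hXb : ∀ t, 0 < t → ENNReal.ofReal (t ^ b) * μ {ω | B * t < X ω} ≤ 1) :
    ∫⁻ ω, ENNReal.ofReal (X ω) ∂μ ≤
      ENNReal.ofReal (tailInterpolationConst a b * A ^ α * B ^ (1 - α)) := by
  obtain ⟨ha₁, hb₁⟩ := lt_one_and_one_lt_of_div_add_div_eq_one ha hab hα₀ hα₁ hα
  have hα' : α * (b - a) = a * (b - 1) := by
    have : 0 < b := ha.trans hab
    field_simp at hα
    linarith
  rw [lintegral_ofReal_eq_lintegral_meas_lt hX, tailInterpolationConst_eq ha₁ hb₁]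
  exact lintegral_Ioi_le_of_le_rpow ha₁ hb₁ hα' hA hB
    (fun _ ↦ measure_lt_le_ofReal_rpow hA hXa) (fun _ ↦ measure_lt_le_ofReal_rpow hB hXb)

theorem statement18_general {a b α A B : ℝ} (ha : 0 < a) (hb : 0 < b) (hab : a ≠ b)
    (hα₀ : 0 < α) (hα₁ : α < 1) (hα : α / a + (1 - α) / b = 1) (hA : 0 < A) (hB : 0 < B)
    (hX : AEMeasurable X μ)
    (hXa : ∀ t, 0 < t → ENNReal.ofReal (t ^ a) * μ {ω | A * t < X ω} ≤ 1)
    (hXb : ∀ t, 0 < t → ENNReal.ofReal (t ^ b) * μ {ω | B * t < X ω} ≤ 1) :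
    ∫⁻ ω, ENNReal.ofReal (X ω) ∂μ ≤
      ENNReal.ofReal (tailInterpolationConst a b * A ^ α * B ^ (1 - α)) := by
  rcases hab.lt_or_gt with hab | hba
  · exact lintegral_ofReal_le_of_tail_le ha hab hα₀ hα₁ hα hA hB hX hXa hXb
  · have h_swap := lintegral_ofReal_le_of_tail_le hb hba (sub_pos.2 hα₁) (sub_lt_self 1 hα₀)
      (by rwa [sub_sub_cancel, add_comm]) hB hA hX hXb hXa
    rwa [sub_sub_cancel, mul_right_comm, tailInterpolationConst_comm] at h_swap

end Tail

/-- Marcinkiewicz-type interpolation for tail bounds: if a nonnegative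
random variable `X` satisfies `sup_{t>0} t^a P[X > At] ≤ 1` and `sup_{t>0} t^b P[X > Bt] ≤ 1`
with `a ≠ b` and `α/a + (1-α)/b = 1`, `α ∈ (0,1)`, then `E[X] ≤ K_{a,b} A^α B^{1-α}`. -/
theorem statement18 : ∀ a b : ℝ, 0 < a → 0 < b → a ≠ b →
    ∃ K : ℝ, 0 < K ∧
    ∀ α : ℝ, 0 < α → α < 1 → α / a + (1 - α) / b = 1 →
    ∀ A B : ℝ, 0 < A → 0 < B →
    ∀ (Ω : Type u) [MeasurableSpace Ω] (P : Measure Ω), IsProbabilityMeasure P →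
    ∀ (X : Ω → ℝ), Measurable X → (∀ ω, 0 ≤ X ω) →
    (∀ t : ℝ, 0 < t → t ^ a * (P {ω | A * t < X ω}).toReal ≤ 1) →
    (∀ t : ℝ, 0 < t → t ^ b * (P {ω | B * t < X ω}).toReal ≤ 1) →
    ∫ ω, X ω ∂P ≤ K * A ^ α * B ^ (1 - α) := by
  intro a b ha hb hab
  have hK := tailInterpolationConst_pos hab
  refine ⟨tailInterpolationConst a b, hK, ?_⟩
  intro α hα₀ hα₁ hα A B hA hB Ω _ P _ X hX hX₀ hXa hXb
  rw [integral_eq_lintegral_of_nonneg_ae (ae_of_all _ hX₀) hX.aestronglyMeasurable]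
  exact ENNReal.toReal_le_of_le_ofReal (by positivity) <|
    statement18_general ha hb hab hα₀ hα₁ hα hA hB hX.aemeasurable
      (fun t ht ↦ ofReal_mul_le_one_of_mul_toReal_le_one (measure_ne_top P _) (hXa t ht))
      (fun t ht ↦ ofReal_mul_le_one_of_mul_toReal_le_one (measure_ne_top P _) (hXb t ht))
end
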